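/- For every n, the number of non-crossing RGFs of length n avoiding the pattern 12333 equals the number of non-crossing RGFs of length n avoiding the pattern 12321; moreover, for every n ≥ 1 this common value satisfies 2·p_n(1212, 12321) = 3^{n−1} + 1. -/

import Mathlib

/-- A restricted growth function (canonical sequential form of a set partition):
a word over the positive integers whose first letter is 1 and where each letter
is at most one more than the maximum of the preceding letters. -/
def IsRGF (w : List ℕ) : Prop :=
  (∀ x ∈ w, 1 ≤ x) ∧
  (w ≠ [] → w.getD 0 0 = 1) ∧
  ∀ i, i + 1 < w.length → w.getD (i + 1) 0 ≤ ((w.take (i + 1)).foldr max 0) + 1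

/-- Two words of the same length are order-isomorphic: corresponding entries
compare the same way (this preserves equalities as well). -/
def WordOrdIso (s t : List ℕ) : Prop :=
  s.length = t.length ∧
  ∀ i j, i < s.length → j < s.length →
    (s.getD i 0 < s.getD j 0 ↔ t.getD i 0 < t.getD j 0)

/-- `w` contains the pattern `p`: a subsequence of `w` is order-isomorphic to `p`. -/
def PatContains (w p : List ℕ) : Prop := ∃ s : List ℕ, s.Sublist w ∧ WordOrdIso s p

/-- `w` avoids the pattern `p`. -/
def PatAvoids (w p : List ℕ) : Prop := ¬ PatContains w p

/-- `pCount n T` = number of RGFs of length `n` avoiding every pattern in `T`. -/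
noncomputable def pCount (n : ℕ) (T : Set (List ℕ)) : ℕ :=
  {w : List ℕ | IsRGF w ∧ w.length = n ∧ ∀ p ∈ T, PatAvoids w p}.ncard

/-- Coefficients of the Motzkin series. -/
def motz : ℕ → ℤ
  | 0 => 1
  | n + 1 => motz n + ∑ i : Fin n, motz i.1 * motz (n - 1 - i.1)
  decreasing_by all_goals omega

/-- Maximum of a word. -/
def mx (w : List ℕ) : ℕ := w.foldr max 0

/-- Reversed restricted growth functions. -/
def RG : List ℕ → Prop
  | [] => True
  | b :: r => RG r ∧ 1 ≤ b ∧ b ≤ mx r + 1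

@[simp] lemma mx_nil : mx [] = 0 := rfl
@[simp] lemma mx_cons (b : ℕ) (r : List ℕ) : mx (b :: r) = max b (mx r) := rfl

lemma mx_le_iff (w : List ℕ) (k : ℕ) : mx w ≤ k ↔ ∀ x ∈ w, x ≤ k := by
  induction w with
  | nil => simp
  | cons b r ih => simp [ih]

lemma le_mx {w : List ℕ} {x : ℕ} (h : x ∈ w) : x ≤ mx w := (mx_le_iff w _).1 le_rfl x h

lemma mx_reverse (w : List ℕ) : mx w.reverse = mx w := by
  apply le_antisymm
  · rw [mx_le_iff]; intro x hx; exact le_mx (by simpa using hx)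
  · rw [mx_le_iff]; intro x hx; exact le_mx (by simpa using hx)

lemma isRGF_append (w : List ℕ) (b : ℕ) :
    IsRGF (w ++ [b]) ↔ IsRGF w ∧ 1 ≤ b ∧ b ≤ mx w + 1 := by
  unfold IsRGF
  constructor
  · rintro ⟨h1, h2, h3⟩
    refine ⟨⟨fun x hx => h1 x (by simp [hx]), fun hw => ?_, fun i hi => ?_⟩, h1 b (by simp), ?_⟩
    · have := h2 (by simp)
      rwa [List.getD_append _ _ _ _ (List.length_pos_iff.2 hw)] at this
    · have := h3 i (by simp; omega)
      rwa [List.getD_append _ _ _ _ hi, List.take_append_of_le_length hi.le] at this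
    · rcases Nat.eq_zero_or_pos w.length with h0 | h0
      · have hw : w = [] := List.length_eq_zero_iff.1 h0
        subst hw
        have := h2 (by simp)
        simp at this
        simp [this]
      · have := h3 (w.length - 1) (by simp; omega)
        have e : w.length - 1 + 1 = w.length := by omega
        rw [e] at this
        simpa [mx] using this
  · rintro ⟨⟨h1, h2, h3⟩, h4, h5⟩
    refine ⟨?_, fun _ => ?_, fun i hi => ?_⟩
    · intro x hx
      simp at hx
      rcases hx with hx | rfl
      · exact h1 x hx
      · exact h4
    · rcases Nat.eq_zero_or_pos w.length with h0 | h0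
      · have hw : w = [] := List.length_eq_zero_iff.1 h0
        subst hw
        simp at h5 ⊢
        omega
      · rw [List.getD_append _ _ _ _ h0]
        exact h2 (List.length_pos_iff.1 h0)
    · simp at hi
      rcases Nat.lt_or_ge (i + 1) w.length with h | h
      · rw [List.getD_append _ _ _ _ h, List.take_append_of_le_length h.le]
        exact h3 i h
      · have e : i + 1 = w.length := by omega
        rw [e]
        simpa [mx] using h5

lemma isRGF_iff (r : List ℕ) : IsRGF r.reverse ↔ RG r := by
  induction r with
  | nil => simp [IsRGF, RG]
  | cons b r ih => rw [List.reverse_cons, isRGF_append, ih, mx_reverse]; rfl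

lemma RG.mem {r : List ℕ} (h : RG r) {a : ℕ} (h1 : 1 ≤ a) (h2 : a ≤ mx r) : a ∈ r := by
  induction r with
  | nil => simp at h2; omega
  | cons b r ih =>
    obtain ⟨h3, h4, h5⟩ := h
    simp at h2 ⊢
    by_cases hb : a = b
    · exact Or.inl hb
    · exact Or.inr (ih h3 (by omega))

lemma RG.pos {r : List ℕ} (h : RG r) {a : ℕ} (h1 : a ∈ r) : 1 ≤ a := by
  induction r with
  | nil => simp at h1
  | cons b r ih =>
    obtain ⟨h3, h4, h5⟩ := h
    simp at h1
    rcases h1 with rfl | h1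
    · exact h4
    · exact ih h3 h1

lemma RG.extend {r : List ℕ} (h : RG r) {a c : ℕ} (h1 : 1 ≤ a) (h2 : a < c) (s : List ℕ)
    (hs : (s ++ [c]).Sublist r) : (s ++ [c, a]).Sublist r := by
  induction r generalizing s with
  | nil => simp at hs
  | cons b r ih =>
    obtain ⟨h3, h4, h5⟩ := h
    cases s with
    | nil =>
      simp only [List.nil_append] at hs ⊢
      rw [List.cons_sublist_cons'] at hs ⊢
      rcases hs with hs | ⟨rfl, hs⟩
      · exact Or.inl (ih h3 [] hs)
      · exact Or.inr ⟨rfl, List.singleton_sublist.2 (h3.mem h1 (by omega))⟩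
    | cons x s =>
      simp only [List.cons_append] at hs ⊢
      rw [List.cons_sublist_cons'] at hs ⊢
      rcases hs with hs | ⟨rfl, hs⟩
      · exact Or.inl (ih h3 (x :: s) hs)
      · exact Or.inr ⟨rfl, ih h3 s hs⟩

lemma length_four {s : List ℕ} (h : s.length = 4) : ∃ a b c d, s = [a, b, c, d] := by
  match s, h with
  | [a, b, c, d], _ => exact ⟨a, b, c, d, rfl⟩

lemma length_five {s : List ℕ} (h : s.length = 5) : ∃ a b c d e, s = [a, b, c, d, e] := by
  match s, h with
  | [a, b, c, d, e], _ => exact ⟨a, b, c, d, e, rfl⟩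

lemma contains_1212 (w : List ℕ) :
    PatContains w [1,2,1,2] ↔ ∃ a b, a < b ∧ [a, b, a, b].Sublist w := by
  constructor
  · rintro ⟨s, hs, hl, h⟩
    obtain ⟨a, b, c, d, rfl⟩ := length_four hl
    have h1 := h 0 1 (by simp) (by simp)
    have h2 := h 0 2 (by simp) (by simp)
    have h3 := h 2 0 (by simp) (by simp)
    have h4 := h 1 3 (by simp) (by simp)
    have h5 := h 3 1 (by simp) (by simp)
    simp at h1 h2 h3 h4 h5
    obtain rfl : a = c := by omega
    obtain rfl : b = d := by omega
    exact ⟨a, b, h1, hs⟩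
  · rintro ⟨a, b, hab, hs⟩
    refine ⟨_, hs, rfl, fun i j hi hj => ?_⟩
    simp at hi hj
    interval_cases i <;> interval_cases j <;> simp <;> omega

lemma contains_12321 (w : List ℕ) :
    PatContains w [1,2,3,2,1] ↔ ∃ a b c, a < b ∧ b < c ∧ [a, b, c, b, a].Sublist w := by
  constructor
  · rintro ⟨s, hs, hl, h⟩
    obtain ⟨a, b, c, d, e, rfl⟩ := length_five hl
    have h1 := h 0 1 (by simp) (by simp)
    have h2 := h 1 2 (by simp) (by simp)
    have h3 := h 1 3 (by simp) (by simp)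
    have h4 := h 3 1 (by simp) (by simp)
    have h5 := h 0 4 (by simp) (by simp)
    have h6 := h 4 0 (by simp) (by simp)
    simp at h1 h2 h3 h4 h5 h6
    obtain rfl : a = e := by omega
    obtain rfl : b = d := by omega
    exact ⟨a, b, c, h1, h2, hs⟩
  · rintro ⟨a, b, c, hab, hbc, hs⟩
    refine ⟨_, hs, rfl, fun i j hi hj => ?_⟩
    simp at hi hj
    interval_cases i <;> interval_cases j <;> simp <;> omega

lemma contains_12333 (w : List ℕ) :
    PatContains w [1,2,3,3,3] ↔ ∃ a b c, a < b ∧ b < c ∧ [a, b, c, c, c].Sublist w := by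
  constructor
  · rintro ⟨s, hs, hl, h⟩
    obtain ⟨a, b, c, d, e, rfl⟩ := length_five hl
    have h1 := h 0 1 (by simp) (by simp)
    have h2 := h 1 2 (by simp) (by simp)
    have h3 := h 2 3 (by simp) (by simp)
    have h4 := h 3 2 (by simp) (by simp)
    have h5 := h 2 4 (by simp) (by simp)
    have h6 := h 4 2 (by simp) (by simp)
    simp at h1 h2 h3 h4 h5 h6
    obtain rfl : c = e := by omega
    obtain rfl : c = d := by omega
    exact ⟨a, b, c, h1, h2, hs⟩
  · rintro ⟨a, b, c, hab, hbc, hs⟩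
    refine ⟨_, hs, rfl, fun i j hi hj => ?_⟩
    simp at hi hj
    interval_cases i <;> interval_cases j <;> simp <;> omega

/-- Reversed RGFs avoiding 1212 and 12321. -/
def GA (r : List ℕ) : Prop :=
  RG r ∧ (∀ a b, a < b → ¬ [b, a, b].Sublist r) ∧
    (∀ a b c, a < b → b < c → ¬ [a, b, c, b].Sublist r)

/-- Reversed RGFs avoiding 1212 and 12333. -/
def GB (r : List ℕ) : Prop :=
  RG r ∧ (∀ a b, a < b → ¬ [b, a, b].Sublist r) ∧ (∀ c, 3 ≤ c → ¬ [c, c, c].Sublist r)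

lemma avoid_1212 {r : List ℕ} (h : RG r) :
    PatAvoids r.reverse [1,2,1,2] ↔ ∀ a b, a < b → ¬ [b, a, b].Sublist r := by
  unfold PatAvoids
  rw [contains_1212]
  constructor
  · intro H a b hab hs
    refine H ⟨a, b, hab, ?_⟩
    rw [← List.reverse_sublist]
    simpa using h.extend (h.pos (hs.subset (a := a) (by simp))) hab [b, a] hs
  · rintro H ⟨a, b, hab, hs⟩
    rw [← List.reverse_sublist] at hs
    refine H a b hab (List.Sublist.trans ?_ (by simpa using hs))
    exact List.sublist_append_left [b, a, b] [a]

lemma GA_iff (r : List ℕ) : GA r ↔ IsRGF r.reverse ∧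
    ∀ p ∈ ({[1,2,1,2], [1,2,3,2,1]} : Set (List ℕ)), PatAvoids r.reverse p := by
  rw [isRGF_iff]
  unfold GA
  refine and_congr_right fun h => ?_
  simp only [Set.mem_insert_iff, Set.mem_singleton_iff, forall_eq_or_imp, forall_eq]
  rw [avoid_1212 h]
  refine and_congr_right fun _ => ?_
  unfold PatAvoids
  rw [contains_12321]
  constructor
  · rintro H ⟨a, b, c, hab, hbc, hs⟩
    rw [← List.reverse_sublist] at hs
    refine H a b c hab hbc (List.Sublist.trans ?_ (by simpa using hs))
    exact List.sublist_append_left [a, b, c, b] [a]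
  · intro H a b c hab hbc hs
    refine H ⟨a, b, c, hab, hbc, ?_⟩
    rw [← List.reverse_sublist]
    simpa using h.extend (h.pos (hs.subset (a := a) (by simp))) hab [a, b, c] hs

lemma GB_iff (r : List ℕ) : GB r ↔ IsRGF r.reverse ∧
    ∀ p ∈ ({[1,2,1,2], [1,2,3,3,3]} : Set (List ℕ)), PatAvoids r.reverse p := by
  rw [isRGF_iff]
  unfold GB
  refine and_congr_right fun h => ?_
  simp only [Set.mem_insert_iff, Set.mem_singleton_iff, forall_eq_or_imp, forall_eq]
  rw [avoid_1212 h]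
  refine and_congr_right fun _ => ?_
  unfold PatAvoids
  rw [contains_12333]
  constructor
  · rintro H ⟨a, b, c, hab, hbc, hs⟩
    rw [← List.reverse_sublist] at hs
    simp at hs
    have ha : 1 ≤ a := h.pos (hs.subset (a := a) (by simp))
    refine H c (by omega) (List.Sublist.trans ?_ hs)
    exact List.sublist_append_left [c, c, c] [b, a]
  · intro H c hc hs
    refine H ⟨1, 2, c, by omega, by omega, ?_⟩
    rw [← List.reverse_sublist]
    have h1 := h.extend (a := 2) (by omega) (by omega) [c, c] hs
    simpa using h.extend (a := 1) (c := 2) (by omega) (by omega) [c, c, c] h1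

section count
variable (G : List ℕ → Prop)

open Classical in
/-- Letters which may be added to `r`. -/
noncomputable def nxt (r : List ℕ) : Finset ℕ :=
  (Finset.range (mx r + 2)).filter (fun b => G (b :: r))

/-- Words with `n` letters added. -/
noncomputable def ext : ℕ → List ℕ → Finset (List ℕ)
  | 0, r => {r}
  | n + 1, r => (nxt G r).biUnion (fun b => ext n (b :: r))

variable {G}

lemma mem_nxt (hR : ∀ r, G r → RG r) (r : List ℕ) (b : ℕ) : b ∈ nxt G r ↔ G (b :: r) := by
  unfold nxt
  simp only [Finset.mem_filter, Finset.mem_range, and_iff_right_iff_imp]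
  intro h
  have := (hR _ h).2.2
  omega

lemma mem_ext (hR : ∀ r, G r → RG r) (hG : ∀ b r, G (b :: r) → G r) (n : ℕ) (r : List ℕ)
    (h : G r) (x : List ℕ) :
    x ∈ ext G n r ↔ G x ∧ r <:+ x ∧ x.length = n + r.length := by
  induction n generalizing r with
  | zero =>
    simp only [ext, Finset.mem_singleton]
    constructor
    · rintro rfl; simp [h]
    · rintro ⟨_, h2, h3⟩
      exact (h2.eq_of_length (by omega)).symm
  | succ n ih =>
    simp only [ext, Finset.mem_biUnion, mem_nxt hR]
    constructor
    · rintro ⟨b, hb, hx⟩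
      rw [ih _ hb] at hx
      refine ⟨hx.1, (List.suffix_cons b r).trans hx.2.1, ?_⟩
      have := hx.2.2
      simp at this
      omega
    · rintro ⟨h1, ⟨t, rfl⟩, h3⟩
      have ht : t ≠ [] := by rintro rfl; simp at h3
      obtain ⟨t', b, rfl⟩ : ∃ t' b, t = t' ++ [b] :=
        ⟨t.dropLast, t.getLast ht, (List.dropLast_append_getLast ht).symm⟩
      have hb : G (b :: r) := by
        clear h3 ht
        clear ih
        induction t' with
        | nil => simpa using h1
        | cons c t' ih' => exact ih' (hG c _ (by simpa using h1))
      refine ⟨b, hb, (ih _ hb).2 ⟨h1, ⟨t', by simp⟩, ?_⟩⟩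
      simp at h3 ⊢
      omega

lemma card_ext (hR : ∀ r, G r → RG r) (hG : ∀ b r, G (b :: r) → G r) (n : ℕ) (r : List ℕ) :
    (ext G (n + 1) r).card = ∑ b ∈ nxt G r, (ext G n (b :: r)).card := by
  rw [ext, Finset.card_biUnion]
  intro b hb c hc hbc
  refine Finset.disjoint_left.2 ?_
  intro x hx hx'
  rw [mem_ext hR hG _ _ ((mem_nxt hR _ _).1 hb)] at hx
  rw [mem_ext hR hG _ _ ((mem_nxt hR _ _).1 hc)] at hx'
  have := (List.suffix_of_suffix_length_le hx.2.1 hx'.2.1 (by simp)).eq_of_length (by simp)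
  simp at this
  exact hbc this

lemma pCount_eq (hR : ∀ r, G r → RG r) (hG : ∀ b r, G (b :: r) → G r) (h0 : G [])
    (T : Set (List ℕ)) (hT : ∀ r, G r ↔ IsRGF r.reverse ∧ ∀ p ∈ T, PatAvoids r.reverse p)
    (n : ℕ) : pCount n T = (ext G n []).card := by
  unfold pCount
  rw [← Set.ncard_coe_finset, ← Set.ncard_image_of_injective _ List.reverse_injective]
  congr 1
  ext x
  simp only [Set.mem_image, Set.mem_setOf_eq, Finset.mem_coe, mem_ext hR hG _ _ h0, hT]
  constructor
  · rintro ⟨w, ⟨h1, h2, h3⟩, rfl⟩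
    simp [h1, h2, h3]
    exact h3
  · rintro ⟨⟨h1, h3⟩, -, h2⟩
    exact ⟨x.reverse, ⟨h1, by simpa using h2, h3⟩, by simp⟩

end count


lemma pair_cons {a b x : ℕ} {r : List ℕ} :
    [a, b].Sublist (x :: r) ↔ [a, b].Sublist r ∨ (a = x ∧ b ∈ r) := by
  rw [List.cons_sublist_cons', List.singleton_sublist]

lemma pair_mem {a b : ℕ} {r : List ℕ} (h : [a, b].Sublist r) : a ∈ r ∧ b ∈ r :=
  ⟨h.subset (by simp), h.subset (by simp)⟩

lemma GA_cons (b : ℕ) (r : List ℕ) : GA (b :: r) ↔ GA r ∧ 1 ≤ b ∧ b ≤ mx r + 1 ∧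
    (∀ a, a < b → ¬ [a, b].Sublist r) ∧
    (∀ d c, b < d → d < c → ¬ [d, c, d].Sublist r) := by
  constructor
  · rintro ⟨⟨h1, h2, h3⟩, h4, h5⟩
    refine ⟨⟨h1, fun a c h => ?_, fun a c d h h' => ?_⟩, h2, h3, fun a h h' => ?_,
      fun d c h h' h'' => ?_⟩
    · exact fun hs => h4 a c h (hs.cons _)
    · exact fun hs => h5 a c d h h' (hs.cons _)
    · exact h4 a b h (h'.cons_cons _)
    · exact h5 b d c h h' (h''.cons_cons _)
  · rintro ⟨⟨h1, h4, h5⟩, h2, h3, h6, h7⟩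
    refine ⟨⟨h1, h2, h3⟩, fun a c h hs => ?_, fun a c d h h' hs => ?_⟩
    · rw [List.cons_sublist_cons'] at hs
      rcases hs with hs | ⟨rfl, hs⟩
      · exact h4 a c h hs
      · exact h6 a h hs
    · rw [List.cons_sublist_cons'] at hs
      rcases hs with hs | ⟨rfl, hs⟩
      · exact h5 a c d h h' hs
      · exact h7 c d h h' hs

lemma GB_cons (b : ℕ) (r : List ℕ) : GB (b :: r) ↔ GB r ∧ 1 ≤ b ∧ b ≤ mx r + 1 ∧
    (∀ a, a < b → ¬ [a, b].Sublist r) ∧ (3 ≤ b → ¬ [b, b].Sublist r) := by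
  constructor
  · rintro ⟨⟨h1, h2, h3⟩, h4, h5⟩
    refine ⟨⟨h1, fun a c h => ?_, fun c h => ?_⟩, h2, h3, fun a h h' => ?_, fun h h' => ?_⟩
    · exact fun hs => h4 a c h (hs.cons _)
    · exact fun hs => h5 c h (hs.cons _)
    · exact h4 a b h (h'.cons_cons _)
    · exact h5 b h (h'.cons_cons _)
  · rintro ⟨⟨h1, h4, h5⟩, h2, h3, h6, h7⟩
    refine ⟨⟨h1, h2, h3⟩, fun a c h hs => ?_, fun c h hs => ?_⟩
    · rw [List.cons_sublist_cons'] at hs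
      rcases hs with hs | ⟨rfl, hs⟩
      · exact h4 a c h hs
      · exact h6 a h hs
    · rw [List.cons_sublist_cons'] at hs
      rcases hs with hs | ⟨rfl, hs⟩
      · exact h5 c h hs
      · exact h7 h hs

lemma GA_RG (r : List ℕ) (h : GA r) : RG r := h.1
lemma GB_RG (r : List ℕ) (h : GB r) : RG r := h.1
lemma GA_tail (b : ℕ) (r : List ℕ) (h : GA (b :: r)) : GA r := ((GA_cons b r).1 h).1
lemma GB_tail (b : ℕ) (r : List ℕ) (h : GB (b :: r)) : GB r := ((GB_cons b r).1 h).1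
lemma GA_nil : GA [] := by simp [GA, RG]
lemma GB_nil : GB [] := by simp [GB, RG]

lemma GA_new {r : List ℕ} (h : GA r) : GA ((mx r + 1) :: r) := by
  rw [GA_cons]
  refine ⟨h, by omega, le_rfl, fun a _ hs => ?_, fun d c hd _ hs => ?_⟩
  · have := le_mx (pair_mem hs).2
    omega
  · have := le_mx (hs.subset (a := d) (by simp))
    omega

lemma GB_new {r : List ℕ} (h : GB r) : GB ((mx r + 1) :: r) := by
  rw [GB_cons]
  refine ⟨h, by omega, le_rfl, fun a _ hs => ?_, fun _ hs => ?_⟩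
  · have := le_mx (pair_mem hs).2
    omega
  · have := le_mx (pair_mem hs).2
    omega

open Classical in
/-- Old letters which may be added, for the pattern 12321. -/
noncomputable def al (r : List ℕ) : Finset ℕ :=
  (Finset.range (mx r + 1)).filter (fun b => GA (b :: r))

lemma mem_al (r : List ℕ) (b : ℕ) : b ∈ al r ↔ b ≤ mx r ∧ GA (b :: r) := by
  simp [al, Nat.lt_succ_iff]

lemma nxt_A {r : List ℕ} (h : GA r) : nxt GA r = insert (mx r + 1) (al r) := by
  ext b
  rw [mem_nxt GA_RG, Finset.mem_insert, mem_al]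
  constructor
  · intro hb
    have := hb.1.2.2
    by_cases e : b = mx r + 1
    · exact Or.inl e
    · exact Or.inr ⟨by omega, hb⟩
  · rintro (rfl | hb)
    · exact GA_new h
    · exact hb.2

lemma al_new {r : List ℕ} (h : GA r) : al ((mx r + 1) :: r) = insert (mx r + 1) (al r) := by
  ext b
  rw [mem_al, Finset.mem_insert, mem_al, mx_cons]
  rw [GA_cons b (_ :: r), GA_cons b r]
  have hn := GA_new h
  constructor
  · rintro ⟨h1, -, h2, h3, h4, h5⟩
    by_cases e : b = mx r + 1
    · exact Or.inl e
    · refine Or.inr ⟨by omega, h, h2, by omega, fun a ha hs => h4 a ha (hs.cons _),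
        fun d c hd hc hs => h5 d c hd hc (hs.cons _)⟩
  · rintro (rfl | ⟨h1, -, h2, h3, h4, h5⟩)
    · refine ⟨by simp, hn, by omega, by simp, fun a ha hs => ?_, fun d c hd hc hs => ?_⟩
      · rw [pair_cons] at hs
        rcases hs with hs | ⟨rfl, hs⟩
        · have := le_mx (pair_mem hs).2
          omega
        · omega
      · have := le_mx (hs.subset (a := d) (by simp))
        simp at this
        omega
    · refine ⟨by omega, hn, h2, by simp; omega, fun a ha hs => ?_, fun d c hd hc hs => ?_⟩
      · rw [pair_cons] at hs
        rcases hs with hs | ⟨rfl, hs⟩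
        · exact h4 a ha hs
        · omega
      · rw [List.cons_sublist_cons'] at hs
        rcases hs with hs | ⟨rfl, hs⟩
        · exact h5 d c hd hc hs
        · have := le_mx (pair_mem hs).2
          omega

lemma head_al {x : ℕ} {r : List ℕ} (h : GA (x :: r)) : x ∈ al (x :: r) := by
  rw [mem_al, GA_cons]
  have h' := (GA_cons x r).1 h
  obtain ⟨h1, h2, h3, h4, h5⟩ := h'
  refine ⟨by simp, h, h2, by simp; omega, fun a ha hs => ?_, fun d c hd hc hs => ?_⟩
  · rw [pair_cons] at hs
    rcases hs with hs | ⟨rfl, hs⟩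
    · exact h4 a ha hs
    · omega
  · rw [List.cons_sublist_cons'] at hs
    rcases hs with hs | ⟨rfl, hs⟩
    · exact h5 d c hd hc hs
    · omega

lemma al_le_head {x b : ℕ} {r : List ℕ} (h : b ∈ al (x :: r)) : b ≤ x := by
  rw [mem_al, GA_cons] at h
  obtain ⟨h1, h, h2, h3, h4, h5⟩ := h
  by_contra hb
  refine h4 x (by omega) (pair_cons.2 (Or.inr ⟨rfl, h.1.1.mem h2 ?_⟩))
  simp at h1
  omega

lemma al_same {x : ℕ} {r : List ℕ} (h : GA (x :: r)) : al (x :: x :: r) = al (x :: r) := by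
  have hh := ((mem_al _ _).1 (head_al h)).2
  ext b
  constructor
  · intro hb
    have h0 := (mem_al _ _).1 hb
    rw [mem_al]
    refine ⟨by simpa using h0.1, ?_⟩
    rw [GA_cons] at h0 ⊢
    obtain ⟨h1, h, h2, h3, h4, h5⟩ := h0
    exact ⟨GA_tail _ _ h, h2, by simpa using h3, fun a ha hs => h4 a ha (hs.cons _),
        fun d c hd hc hs => h5 d c hd hc (hs.cons _)⟩
  · intro hb
    have hle := al_le_head hb
    have h0 := (mem_al _ _).1 hb
    rw [mem_al]
    refine ⟨by simpa using h0.1, ?_⟩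
    rw [GA_cons] at h0 ⊢
    obtain ⟨h1, h, h2, h3, h4, h5⟩ := h0
    refine ⟨hh, h2, by simpa using h3, fun a ha hs => ?_, fun d c hd hc hs => ?_⟩
    · rw [pair_cons] at hs
      rcases hs with hs | ⟨rfl, hs⟩
      · exact h4 a ha hs
      · omega
    · rw [List.cons_sublist_cons'] at hs
      rcases hs with hs | ⟨rfl, hs⟩
      · exact h5 d c hd hc hs
      · rw [pair_cons] at hs
        rcases hs with hs | ⟨rfl, hs⟩
        · exact h5 d c hd hc (hs.cons_cons _)
        · omega

lemma al_low {x b : ℕ} {r : List ℕ} (hb : b ∈ al (x :: r)) (hx : b ≠ x) :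
    al (b :: x :: r) = {b} := by
  have hle := al_le_head hb
  have h0 := (mem_al _ _).1 hb
  ext e
  rw [Finset.mem_singleton]
  constructor
  · intro he
    have hle' := al_le_head he
    by_contra hne
    have h1 := (mem_al _ _).1 he
    rw [GA_cons] at h1
    refine h1.2.2.2.2.2 b x (by omega) (by omega) ?_
    apply List.Sublist.cons_cons
    rw [pair_cons]
    right
    refine ⟨rfl, ?_⟩
    have h2 := h0.2.1.1.mem h0.2.1.2.1 h0.1
    simp at h2
    tauto
  · rintro rfl
    exact head_al h0.2

lemma count_A (n : ℕ) (x : ℕ) (r : List ℕ) (h : GA (x :: r)) :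
    2 * (ext GA n (x :: r)).card + (al (x :: r)).card = 3 ^ n * (al (x :: r)).card + 2 := by
  induction n generalizing x r with
  | zero => simp [ext]; omega
  | succ n ih =>
    have hnot : mx (x :: r) + 1 ∉ al (x :: r) := by
      rw [mem_al]; omega
    rw [card_ext GA_RG GA_tail, nxt_A h, Finset.sum_insert hnot,
      ← Finset.add_sum_erase _ _ (head_al h)]
    have e1 := ih _ _ (GA_new h)
    rw [al_new h, Finset.card_insert_of_notMem hnot] at e1
    have e2 := ih _ _ ((mem_al _ _).1 (head_al h)).2
    rw [al_same h] at e2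
    have e3 : 2 * ∑ b ∈ (al (x :: r)).erase x, (ext GA n (b :: x :: r)).card
        = ∑ b ∈ (al (x :: r)).erase x, (3 ^ n + 1) := by
      rw [Finset.mul_sum]
      refine Finset.sum_congr rfl fun b hb => ?_
      rw [Finset.mem_erase] at hb
      have := ih _ _ ((mem_al _ _).1 hb.2).2
      rw [al_low hb.2 hb.1] at this
      simp at this
      omega
    rw [Finset.sum_const, Finset.card_erase_of_mem (head_al h), smul_eq_mul] at e3
    have hpos : 0 < (al (x :: r)).card := Finset.card_pos.2 ⟨_, head_al h⟩
    obtain ⟨k, hk⟩ : ∃ k, (al (x :: r)).card = k + 1 := ⟨_, (Nat.succ_pred_eq_of_pos hpos).symm⟩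
    rw [hk] at e1 e2 e3 ⊢
    simp only [Nat.add_sub_cancel] at e3
    rw [pow_succ]
    nlinarith

lemma nxt_nil {G : List ℕ → Prop} (hR : ∀ r, G r → RG r) (h : G [1]) : nxt G [] = {1} := by
  ext b
  rw [mem_nxt hR, Finset.mem_singleton]
  constructor
  · intro hb
    have := (hR _ hb).2
    simp at this
    omega
  · rintro rfl
    exact h

lemma total_A (n : ℕ) : 2 * (ext GA (n + 1) []).card = 3 ^ n + 1 := by
  have h1 : GA [1] := GA_new GA_nil
  rw [card_ext GA_RG GA_tail, nxt_nil GA_RG h1, Finset.sum_singleton]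
  have := count_A n 1 [] h1
  have e : al [1] = {1} := by
    ext b
    rw [Finset.mem_singleton]
    constructor
    · intro hb
      have h2 := al_le_head hb
      have h3 := ((mem_al _ _).1 hb).2.1.2.1
      omega
    · rintro rfl
      exact head_al h1
  rw [e] at this
  simp at this
  omega

/-- Counting function, letter 2 closed. -/
def qf : ℕ → ℕ → ℕ
  | 0, _ => 1
  | n + 1, m => qf n (m + 1) + (qf n 0 + ∑ j ∈ Finset.range m, qf n j)

/-- Counting function, letter 2 open. -/
def pf : ℕ → ℕ → ℕ
  | 0, _ => 1
  | n + 1, m => pf n (m + 1) + (qf n 0 + (pf n 0 + ∑ j ∈ Finset.range m, pf n j))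

lemma motz_eq : (PowerSeries.mk motz) = 1 + PowerSeries.X * PowerSeries.mk motz
    + PowerSeries.X * (PowerSeries.X * (PowerSeries.mk motz * PowerSeries.mk motz)) := by
  ext n
  cases n with
  | zero => simp [motz]
  | succ n =>
    rw [PowerSeries.coeff_mk, motz]
    simp only [map_add, PowerSeries.coeff_succ_X_mul, PowerSeries.coeff_one]
    rw [if_neg (by omega), PowerSeries.coeff_mk, zero_add]
    congr 1
    cases n with
    | zero => simp
    | succ k =>
      rw [PowerSeries.coeff_succ_X_mul, PowerSeries.coeff_mul,
        Finset.Nat.sum_antidiagonal_eq_sum_range_succ_mk,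
        Fin.sum_univ_eq_sum_range (fun i => motz i * motz (k + 1 - 1 - i))]
      simp

/-- A sequence of series satisfying the fixed point equation has the coefficients
given by the counting recursion. -/
lemma exists_series : ∃ (G H : ℕ → PowerSeries ℤ),
    (∀ m, G m = 1 + PowerSeries.X * (G (m + 1) + (G 0 + ∑ j ∈ Finset.range m, G j))) ∧
    (∀ m, H m = 1 + PowerSeries.X * (H (m + 1) + (G 0 + (H 0 + ∑ j ∈ Finset.range m, H j)))) ∧
    H 0 * (1 - 3 * PowerSeries.X) = 1 := by
  obtain ⟨M, hM⟩ : ∃ M : PowerSeries ℤ, M = 1 + PowerSeries.X * M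
    + PowerSeries.X * (PowerSeries.X * (M * M)) := ⟨_, motz_eq⟩
  have hM0 : M ≠ 0 := by
    rintro rfl
    simp at hM
  have inv : ∀ f : PowerSeries ℤ, ∃ g, g * (1 - PowerSeries.X * f) = 1 := by
    intro f
    have : IsUnit (1 - PowerSeries.X * f) := by
      rw [PowerSeries.isUnit_iff_constantCoeff]
      simp
    obtain ⟨u, hu⟩ := this
    exact ⟨(↑u⁻¹ : PowerSeries ℤ), by rw [← hu]; simp⟩
  obtain ⟨K, hK⟩ := inv M
  obtain ⟨J, hJ⟩ := inv 3
  have hK0 : (1 - PowerSeries.X * M) ≠ 0 := by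
    intro h
    rw [h] at hK
    simp at hK
  have hsum : ∀ (A : PowerSeries ℤ) (m : ℕ),
      PowerSeries.X * M * ∑ j ∈ Finset.range m, (1 + PowerSeries.X * M) ^ j * A
        = ((1 + PowerSeries.X * M) ^ m - 1) * A := by
    intro A m
    rw [← Finset.sum_mul, ← mul_geom_sum]
    ring
  -- main algebra
  have hH : J * (1 - PowerSeries.X * M) = M * (1 + PowerSeries.X * (K * M)) := by
    linear_combination (-J * (1 - PowerSeries.X * M)) * hK - J * K * hM + K * M * hJ + M * hK
  generalize hX : (PowerSeries.X : PowerSeries ℤ) = X at *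
  refine ⟨fun m => (1 + X * M) ^ m * (K * M), fun m => (1 + X * M) ^ m * J, ?_, ?_, ?_⟩
  · intro m
    apply mul_left_cancel₀ hM0
    have := hsum (K * M) m
    simp only [pow_zero, one_mul]
    rw [pow_succ]
    linear_combination -this + (1 + X * M) ^ m * (K * M) * hM + M * hK
  · intro m
    apply mul_left_cancel₀ hM0
    have := hsum J m
    simp only [pow_zero, one_mul]
    rw [pow_succ]
    linear_combination -this + (1 + X * M) ^ m * J * hM + hH
  · simp only [pow_zero, one_mul]
    linear_combination hJ

lemma pf_eq (n : ℕ) : pf n 0 = 3 ^ n := by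
  obtain ⟨G, H, hG, hH, hJ⟩ := exists_series
  have h1 : ∀ n m, PowerSeries.coeff n (G m) = (qf n m : ℤ) := by
    intro n
    induction n with
    | zero => intro m; rw [hG]; simp [qf]
    | succ n ih =>
      intro m
      rw [hG]
      simp [qf, PowerSeries.coeff_succ_X_mul, PowerSeries.coeff_one, ih]
  have h2 : ∀ n m, PowerSeries.coeff n (H m) = (pf n m : ℤ) := by
    intro n
    induction n with
    | zero => intro m; rw [hH]; simp [pf]
    | succ n ih =>
      intro m
      rw [hH]
      simp [pf, PowerSeries.coeff_succ_X_mul, PowerSeries.coeff_one, ih, h1]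
  have h3 : H 0 = 1 + PowerSeries.X * (PowerSeries.C 3 * H 0) := by
    have : (PowerSeries.C 3 : PowerSeries ℤ) = 3 := by simp
    rw [this]
    linear_combination hJ
  induction n with
  | zero => rfl
  | succ n ih =>
    have h4 := h2 (n + 1) 0
    rw [h3] at h4
    simp only [map_add, PowerSeries.coeff_succ_X_mul, PowerSeries.coeff_one,
      PowerSeries.coeff_C_mul, h2, ih] at h4
    rw [if_neg (by omega)] at h4
    rw [pow_succ]
    push_cast at h4
    zify
    linarith

lemma sum_filter_lt (F : ℕ → ℕ) (L : Finset ℕ) :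
    ∑ b ∈ L, F (L.filter (· < b)).card = ∑ j ∈ Finset.range L.card, F j := by
  induction L using Finset.induction_on_max with
  | empty => simp
  | insert a s hs ih =>
    have ha : a ∉ s := fun h => lt_irrefl _ (hs a h)
    rw [Finset.sum_insert ha, Finset.card_insert_of_notMem ha, Finset.sum_range_succ, ← ih,
      add_comm]
    congr 1
    · refine Finset.sum_congr rfl fun b hb => ?_
      rw [Finset.filter_insert, if_neg (by have := hs b hb; omega)]
    · rw [Finset.filter_insert, if_neg (by omega), Finset.filter_true_of_mem hs]

open Classical in
/-- Old letters at least 3 which may be added, for the pattern 12333. -/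
noncomputable def bl (r : List ℕ) : Finset ℕ :=
  (Finset.range (mx r + 1)).filter (fun b => 3 ≤ b ∧ GB (b :: r))

lemma mem_bl (r : List ℕ) (b : ℕ) : b ∈ bl r ↔ b ≤ mx r ∧ 3 ≤ b ∧ GB (b :: r) := by
  simp [bl, Nat.lt_succ_iff]

lemma bl_new {r : List ℕ} (h : GB r) (h2 : 2 ≤ mx r) :
    bl ((mx r + 1) :: r) = insert (mx r + 1) (bl r) := by
  ext b
  rw [mem_bl, Finset.mem_insert, mem_bl, mx_cons]
  rw [GB_cons b (_ :: r), GB_cons b r]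
  have hn := GB_new h
  constructor
  · rintro ⟨h1, h0, -, h2, h3, h4, h5⟩
    by_cases e : b = mx r + 1
    · exact Or.inl e
    · exact Or.inr ⟨by omega, h0, h, h2, by omega, fun a ha hs => h4 a ha (hs.cons _),
        fun hd hs => h5 hd (hs.cons _)⟩
  · rintro (rfl | ⟨h1, h0, -, h2, h3, h4, h5⟩)
    · refine ⟨by simp, by omega, hn, by omega, by simp, fun a ha hs => ?_, fun hd hs => ?_⟩
      · rw [pair_cons] at hs
        rcases hs with hs | ⟨rfl, hs⟩
        · have := le_mx (pair_mem hs).2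
          omega
        · omega
      · rw [pair_cons] at hs
        rcases hs with hs | ⟨-, hs⟩
        · have := le_mx (pair_mem hs).2
          omega
        · have := le_mx hs
          omega
    · refine ⟨by omega, h0, hn, h2, by simp; omega, fun a ha hs => ?_, fun hd hs => ?_⟩
      · rw [pair_cons] at hs
        rcases hs with hs | ⟨rfl, hs⟩
        · exact h4 a ha hs
        · omega
      · rw [pair_cons] at hs
        rcases hs with hs | ⟨rfl, hs⟩
        · exact h5 hd hs
        · omega

lemma bl_le {r : List ℕ} {b e : ℕ} (hb : b ≤ mx r) (he : e ∈ bl (b :: r)) : e ≤ b := by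
  obtain ⟨h1, h2, h3⟩ := (mem_bl _ _).1 he
  rw [GB_cons] at h3
  by_contra hlt
  refine h3.2.2.2.1 b (by omega) (pair_cons.2 (Or.inr ⟨rfl, h3.1.1.1.mem (by omega) ?_⟩))
  simp at h1
  omega

lemma bl_small {r : List ℕ} {b : ℕ} (hb : b ≤ mx r) (h2 : b ≤ 2) : bl (b :: r) = ∅ := by
  rw [Finset.eq_empty_iff_forall_notMem]
  intro e he
  have := bl_le hb he
  have := ((mem_bl _ _).1 he).2.1
  omega

lemma bl_old {r : List ℕ} {b : ℕ} (hb : b ∈ bl r) : bl (b :: r) = (bl r).filter (· < b) := by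
  have hb' := (mem_bl _ _).1 hb
  ext e
  rw [Finset.mem_filter]
  constructor
  · intro he
    have hle := bl_le hb'.1 he
    obtain ⟨h1, h2, h3⟩ := (mem_bl _ _).1 he
    rw [GB_cons] at h3
    obtain ⟨h4, h5, h6, h7, h8⟩ := h3
    have hne : e ≠ b := by
      rintro rfl
      exact h8 h2 (pair_cons.2 (Or.inr ⟨rfl, h4.1.1.mem h5 hb'.1⟩))
    refine ⟨(mem_bl _ _).2 ⟨by omega, h2, (GB_cons _ _).2 ⟨GB_tail _ _ h4, h5, by omega,
      fun a ha hs => h7 a ha (hs.cons _), fun hd hs => h8 hd (hs.cons _)⟩⟩, by omega⟩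
  · rintro ⟨he, hlt⟩
    obtain ⟨h1, h2, h3⟩ := (mem_bl _ _).1 he
    rw [GB_cons] at h3
    obtain ⟨h4, h5, h6, h7, h8⟩ := h3
    refine (mem_bl _ _).2 ⟨by simp; omega, h2, (GB_cons _ _).2 ⟨hb'.2.2, h5, by simp; omega,
      fun a ha hs => ?_, fun hd hs => ?_⟩⟩
    · rw [pair_cons] at hs
      rcases hs with hs | ⟨rfl, hs⟩
      · exact h7 a ha hs
      · omega
    · rw [pair_cons] at hs
      rcases hs with hs | ⟨rfl, hs⟩
      · exact h8 hd hs
      · omega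

lemma GB_one {r : List ℕ} (h : GB r) : GB (1 :: r) := by
  rw [GB_cons]
  refine ⟨h, le_rfl, by omega, fun a ha hs => ?_, by omega⟩
  have := h.1.pos (pair_mem hs).1
  omega

lemma GB_two {r : List ℕ} (h : GB r) (hm : 2 ≤ mx r) :
    GB (2 :: r) ↔ ¬ [1, 2].Sublist r := by
  rw [GB_cons]
  constructor
  · exact fun h' => h'.2.2.2.1 1 (by omega)
  · intro h'
    refine ⟨h, by omega, by omega, fun a ha hs => ?_, by omega⟩
    have := h.1.pos (pair_mem hs).1
    obtain rfl : a = 1 := by omega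
    exact h' hs

lemma nxt_Q {r : List ℕ} (h : GB r) (hm : 2 ≤ mx r) (hs : [1, 2].Sublist r) :
    nxt GB r = insert (mx r + 1) (insert 1 (bl r)) := by
  ext b
  rw [mem_nxt GB_RG, Finset.mem_insert, Finset.mem_insert, mem_bl]
  constructor
  · intro hb
    have h1 := hb.1.2
    have h2 : b ≠ 2 := by
      rintro rfl
      exact (GB_two h hm).1 hb hs
    by_cases e : b = mx r + 1
    · exact Or.inl e
    · by_cases e' : b = 1
      · exact Or.inr (Or.inl e')
      · exact Or.inr (Or.inr ⟨by omega, by omega, hb⟩)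
  · rintro (rfl | rfl | hb)
    · exact GB_new h
    · exact GB_one h
    · exact hb.2.2

lemma nxt_P {r : List ℕ} (h : GB r) (hm : 2 ≤ mx r) (hs : ¬ [1, 2].Sublist r) :
    nxt GB r = insert (mx r + 1) (insert 1 (insert 2 (bl r))) := by
  ext b
  rw [mem_nxt GB_RG, Finset.mem_insert, Finset.mem_insert, Finset.mem_insert, mem_bl]
  constructor
  · intro hb
    have h1 := hb.1.2
    by_cases e : b = mx r + 1
    · exact Or.inl e
    · by_cases e' : b = 1
      · exact Or.inr (Or.inl e')
      · by_cases e'' : b = 2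
        · exact Or.inr (Or.inr (Or.inl e''))
        · exact Or.inr (Or.inr (Or.inr ⟨by omega, by omega, hb⟩))
  · rintro (rfl | rfl | rfl | hb)
    · exact GB_new h
    · exact GB_one h
    · exact (GB_two h hm).2 hs
    · exact hb.2.2

lemma count_Q (n : ℕ) (r : List ℕ) (h : GB r) (hm : 2 ≤ mx r) (hs : [1, 2].Sublist r) :
    (ext GB n r).card = qf n (bl r).card := by
  induction n generalizing r with
  | zero => simp [ext, qf]
  | succ n ih =>
    have hnew : mx r + 1 ∉ bl r := by rw [mem_bl]; omega
    have hone : 1 ∉ bl r := by rw [mem_bl]; omega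
    rw [card_ext GB_RG GB_tail, nxt_Q h hm hs, Finset.sum_insert (by simp [hnew]; omega),
      Finset.sum_insert hone, qf]
    congr 1
    · rw [ih _ (GB_new h) (by simp; omega) (hs.cons _), bl_new h hm,
        Finset.card_insert_of_notMem hnew]
    congr 1
    · rw [ih _ (GB_one h) (by simp; omega) (hs.cons _), bl_small (by omega) (by omega)]
      rfl
    · rw [← sum_filter_lt]
      refine Finset.sum_congr rfl fun b hb => ?_
      rw [ih _ ((mem_bl _ _).1 hb).2.2 (by simp; omega) (hs.cons _), bl_old hb]

lemma count_P (n : ℕ) (r : List ℕ) (h : GB r) (hm : 2 ≤ mx r) (hs : ¬ [1, 2].Sublist r) :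
    (ext GB n r).card = pf n (bl r).card := by
  induction n generalizing r with
  | zero => simp [ext, pf]
  | succ n ih =>
    have hnew : mx r + 1 ∉ bl r := by rw [mem_bl]; omega
    have hone : 1 ∉ bl r := by rw [mem_bl]; omega
    have htwo : 2 ∉ bl r := by rw [mem_bl]; omega
    have key : ∀ b, b ≠ 1 → ¬ [1, 2].Sublist (b :: r) := by
      intro b hb hs'
      rw [pair_cons] at hs'
      rcases hs' with hs' | ⟨hs', -⟩
      · exact hs hs'
      · exact hb hs'.symm
    rw [card_ext GB_RG GB_tail, nxt_P h hm hs, Finset.sum_insert (by simp [hnew]; omega),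
      Finset.sum_insert (by simp [hone]), Finset.sum_insert htwo, pf]
    congr 1
    · rw [ih _ (GB_new h) (by simp; omega) (key _ (by omega)), bl_new h hm,
        Finset.card_insert_of_notMem hnew]
    congr 1
    · rw [count_Q _ _ (GB_one h) (by simp; omega)
        (pair_cons.2 (Or.inr ⟨rfl, h.1.mem (by omega) hm⟩)), bl_small (by omega) (by omega)]
      rfl
    congr 1
    · rw [ih _ ((GB_two h hm).2 hs) (by simp) (key _ (by omega)), bl_small hm le_rfl]
      rfl
    · rw [← sum_filter_lt]
      refine Finset.sum_congr rfl fun b hb => ?_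
      have hb' := (mem_bl _ _).1 hb
      rw [ih _ hb'.2.2 (by simp; omega) (key _ (by omega)), bl_old hb]

lemma count_S (n : ℕ) (r : List ℕ) (h : GB r) (hm : mx r = 1) :
    2 * (ext GB n r).card = 3 ^ n + 1 := by
  induction n generalizing r with
  | zero => simp [ext]
  | succ n ih =>
    have h2 : GB (2 :: r) := by
      have := GB_new h
      rwa [hm] at this
    have e : nxt GB r = {1, 2} := by
      ext b
      rw [mem_nxt GB_RG, Finset.mem_insert, Finset.mem_singleton]
      constructor
      · intro hb
        have := hb.1.2
        omega
      · rintro (rfl | rfl)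
        · exact GB_one h
        · exact h2
    have hno : 2 ∉ r := fun hh => by have := le_mx hh; omega
    rw [card_ext GB_RG GB_tail, e, Finset.sum_pair (by omega), mul_add,
      ih _ (GB_one h) (by simp [hm]), count_P n _ h2 (by simp) ?_]
    · have : bl (2 :: r) = ∅ := by
        rw [Finset.eq_empty_iff_forall_notMem]
        intro e he
        obtain ⟨h3, h4, -⟩ := (mem_bl _ _).1 he
        simp [hm] at h3
        omega
      rw [this, Finset.card_empty, pf_eq, pow_succ]
      ring
    · intro hs
      rw [pair_cons] at hs
      rcases hs with hs | ⟨hs, -⟩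
      · exact hno (pair_mem hs).2
      · omega

lemma total_B (n : ℕ) : 2 * (ext GB (n + 1) []).card = 3 ^ n + 1 := by
  have h1 : GB [1] := GB_new GB_nil
  rw [card_ext GB_RG GB_tail, nxt_nil GB_RG h1, Finset.sum_singleton]
  exact count_S n _ h1 rfl

/-- Theorem 3.9: non-crossing partitions avoiding 12333 are equinumerous with
those avoiding 12321, and `2·p_n(1212, 12321) = 3^{n-1} + 1` for `n ≥ 1`. -/
theorem stmt13 :
    (∀ n : ℕ, pCount n {[1,2,1,2], [1,2,3,3,3]} = pCount n {[1,2,1,2], [1,2,3,2,1]}) ∧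
    (∀ n : ℕ, 1 ≤ n → 2 * pCount n {[1,2,1,2], [1,2,3,2,1]} = 3 ^ (n - 1) + 1) := by
  have hA := pCount_eq GA_RG GA_tail GA_nil _ GA_iff
  have hB := pCount_eq GB_RG GB_tail GB_nil _ GB_iff
  constructor
  · intro n
    rw [hA, hB]
    cases n with
    | zero => rfl
    | succ n =>
      have := total_A n
      have := total_B n
      omega
  · intro n hn
    obtain ⟨m, rfl⟩ : ∃ m, n = m + 1 := ⟨n - 1, by omega⟩
    rw [hA, total_A]
    rfl
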